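/- Let f : ℝⁿ → [0,∞) be a Borel measurable log-concave function vanishing at infinity. Then its symmetric decreasing rearrangement f* is log-concave. -/

import Mathlib

open MeasureTheory Filter Pointwise ENNReal

noncomputable section

/-- `f` is log-concave: `log f` is concave on the support of `f`. -/
def IsLogConcave {n : ℕ} (f : EuclideanSpace ℝ (Fin n) → ℝ) : Prop :=
  ConcaveOn ℝ (Function.support f) (fun x => Real.log (f x))

/-- `A*`: the open origin-centered Euclidean ball with the same volume as `A`. -/
def rearrangedSet (n : ℕ) (A : Set (EuclideanSpace ℝ (Fin n))) :
    Set (EuclideanSpace ℝ (Fin n)) :=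
  Metric.ball 0 ((volume A / volume (Metric.ball (0 : EuclideanSpace ℝ (Fin n)) 1)).toReal
    ^ (1 / (n : ℝ)))

/-- The symmetric decreasing rearrangement `f*(x) = ∫₀^∞ 1_{{f>t}*}(x) dt`. -/
def symmDecRearrangement {n : ℕ} (f : EuclideanSpace ℝ (Fin n) → ℝ)
    (x : EuclideanSpace ℝ (Fin n)) : ℝ :=
  ∫ t in Set.Ioi (0 : ℝ), (rearrangedSet n {y | t < f y}).indicator (fun _ => (1 : ℝ)) x

/-- One-dimensional Brunn–Minkowski for compact sets. -/
lemma bm1_compact {a b : ℝ} (ha : 0 < a) (hb : 0 < b) {K L C : Set ℝ}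
    (hK : IsCompact K) (hL : IsCompact L) (hK0 : K.Nonempty) (hL0 : L.Nonempty)
    (h : ∀ x ∈ K, ∀ y ∈ L, a * x + b * y ∈ C) :
    ENNReal.ofReal a * volume K + ENNReal.ofReal b * volume L ≤ volume C := by
  obtain ⟨k, hkK, hk⟩ := hK.exists_isGreatest hK0
  obtain ⟨l, hlL, hl⟩ := hL.exists_isLeast hL0
  have h1 : volume ((b * l) +ᵥ (a • K)) = ENNReal.ofReal a * volume K := by
    rw [measure_vadd, Measure.addHaar_smul]
    simp [abs_of_pos ha]
  have h2 : volume ((a * k) +ᵥ (b • L)) = ENNReal.ofReal b * volume L := by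
    rw [measure_vadd, Measure.addHaar_smul]
    simp [abs_of_pos hb]
  rw [← h1, ← h2, ← measure_union₀]
  · apply measure_mono
    rintro z (hz | hz)
    · obtain ⟨_, ⟨x, hx, rfl⟩, rfl⟩ := hz
      have := h x hx l hlL
      simpa [add_comm] using this
    · obtain ⟨_, ⟨x, hx, rfl⟩, rfl⟩ := hz
      have := h k hkK x hx
      simpa [add_comm] using this
  · exact (((hL.smul b).vadd (a * k)).measurableSet).nullMeasurableSet
  · refine measure_mono_null (t := {a * k + b * l}) ?_ (by simp)
    rintro z ⟨hz, hz'⟩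
    obtain ⟨_, ⟨x, hx, rfl⟩, rfl⟩ := hz
    obtain ⟨_, ⟨y, hy, rfl⟩, hxy⟩ := hz'
    simp only [vadd_eq_add, smul_eq_mul] at hxy ⊢
    have e1 := mul_le_mul_of_nonneg_left (hk hx) ha.le
    have e2 := mul_le_mul_of_nonneg_left (hl hy) hb.le
    simp only [Set.mem_singleton_iff]
    linarith

/-- A compact, nonempty inner approximation. -/
lemma exists_compact_approx {A : Set ℝ} (hA : MeasurableSet A)
    {r : ℝ≥0∞} (hr : r < volume A) :
    ∃ K ⊆ A, IsCompact K ∧ K.Nonempty ∧ r < volume K := by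
  obtain ⟨K, hKA, hK, h⟩ := hA.exists_lt_isCompact hr
  refine ⟨K, hKA, hK, ?_, h⟩
  by_contra hne
  rw [Set.not_nonempty_iff_eq_empty] at hne
  simp [hne] at h

lemma exists_compact_seq {A : Set ℝ} (hA : MeasurableSet A) (hA0 : A.Nonempty) :
    volume A = ⨆ K : {K : Set ℝ // K ⊆ A ∧ IsCompact K ∧ K.Nonempty}, volume K.1 := by
  apply le_antisymm
  · refine le_of_forall_lt fun r hr => ?_
    obtain ⟨K, h1, h2, h3, h4⟩ := exists_compact_approx hA hr
    exact h4.trans_le (le_iSup (fun K : {K : Set ℝ // K ⊆ A ∧ IsCompact K ∧ K.Nonempty} =>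
      volume K.1) ⟨K, h1, h2, h3⟩)
  · exact iSup_le fun K => measure_mono K.2.1

/-- One-dimensional Brunn–Minkowski. -/
lemma bm1 {a b : ℝ} (ha : 0 < a) (hb : 0 < b) {A B C : Set ℝ}
    (hA : MeasurableSet A) (hB : MeasurableSet B) (hA0 : A.Nonempty) (hB0 : B.Nonempty)
    (h : ∀ x ∈ A, ∀ y ∈ B, a * x + b * y ∈ C) :
    ENNReal.ofReal a * volume A + ENNReal.ofReal b * volume B ≤ volume C := by
  obtain ⟨x, hx⟩ := hA0
  obtain ⟨y, hy⟩ := hB0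
  rw [exists_compact_seq hA ⟨x, hx⟩, exists_compact_seq hB ⟨y, hy⟩, ENNReal.mul_iSup,
    ENNReal.mul_iSup]
  have : Nonempty {K : Set ℝ // K ⊆ A ∧ IsCompact K ∧ K.Nonempty} :=
    ⟨⟨{x}, by simpa using hx, isCompact_singleton, by simp⟩⟩
  have : Nonempty {K : Set ℝ // K ⊆ B ∧ IsCompact K ∧ K.Nonempty} :=
    ⟨⟨{y}, by simpa using hy, isCompact_singleton, by simp⟩⟩
  refine ENNReal.iSup_add_iSup_le fun K L => ?_
  exact bm1_compact ha hb K.2.2.1 L.2.2.1 K.2.2.2 L.2.2.2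
    fun x hx y hy => h x (K.2.1 hx) y (L.2.1 hy)

/-- Layer cake for functions bounded by one. -/
lemma layer_one {F : ℝ → ℝ≥0∞} (hF : Measurable F) (h1 : ∀ x, F x ≤ 1) :
    ∫⁻ x, F x = ∫⁻ t in Set.Ioo (0 : ℝ) 1, volume {x | ENNReal.ofReal t < F x} := by
  have hfin : ∀ x, F x ≠ ⊤ := fun x => ne_top_of_le_ne_top (by simp) (h1 x)
  have e : ∫⁻ x, F x = ∫⁻ x, ENNReal.ofReal ((F x).toReal) :=
    lintegral_congr fun x => (ENNReal.ofReal_toReal (hfin x)).symm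
  rw [e, lintegral_eq_lintegral_meas_lt volume (Eventually.of_forall fun x => by simp)
    hF.ennreal_toReal.aemeasurable, ← lintegral_indicator measurableSet_Ioi,
    ← lintegral_indicator measurableSet_Ioo]
  refine lintegral_congr fun t => ?_
  by_cases ht : 0 < t
  · have e2 : {x | t < (F x).toReal} = {x | ENNReal.ofReal t < F x} := by
      ext x
      exact (ENNReal.ofReal_lt_iff_lt_toReal ht.le (hfin x)).symm
    by_cases ht1 : t < 1
    · rw [Set.indicator_of_mem (by simpa using ht), Set.indicator_of_mem (show t ∈ Set.Ioo (0 : ℝ) 1 from ⟨ht, ht1⟩), e2]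
    · rw [Set.indicator_of_mem (by simpa using ht), Set.indicator_of_notMem
        (fun h => ht1 h.2), e2]
      convert measure_empty (μ := (volume : Measure ℝ))
      ext x
      simp only [Set.mem_ofPred_eq, Set.mem_empty_iff_false, iff_false, not_lt]
      refine (h1 x).trans ?_
      rw [← ENNReal.ofReal_one]
      exact ENNReal.ofReal_le_ofReal (not_lt.1 ht1)
  · rw [Set.indicator_of_notMem (by simpa using ht), Set.indicator_of_notMem
        (fun h => ht h.1)]

/-- One-dimensional Prékopa–Leindler, normalised. -/
lemma pl1_norm {a b : ℝ} (ha : 0 < a) (hb : 0 < b) (hab : a + b = 1) {F G H : ℝ → ℝ≥0∞}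
    (hF : Measurable F) (hG : Measurable G) (hH : Measurable H)
    (hF1 : ⨆ x, F x = 1) (hG1 : ⨆ x, G x = 1)
    (h : ∀ x y, F x ^ a * G y ^ b ≤ H (a * x + b * y)) :
    ENNReal.ofReal a * (∫⁻ x, F x) + ENNReal.ofReal b * (∫⁻ x, G x) ≤ ∫⁻ x, H x := by
  have hF1' : ∀ x, F x ≤ 1 := fun x => hF1 ▸ le_iSup F x
  have hG1' : ∀ x, G x ≤ 1 := fun x => hG1 ▸ le_iSup G x
  have hmin : ∫⁻ x, min (H x) 1 ≤ ∫⁻ x, H x := lintegral_mono fun x => min_le_left _ _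
  refine le_trans ?_ hmin
  rw [layer_one hF hF1', layer_one hG hG1', layer_one (hH.min measurable_const)
    (fun x => min_le_right _ _)]
  have mF : Measurable fun t : ℝ => volume {x | ENNReal.ofReal t < F x} :=
    Antitone.measurable fun s t hst => measure_mono fun x hx =>
      (ENNReal.ofReal_le_ofReal hst).trans_lt hx
  have mG : Measurable fun t : ℝ => volume {x | ENNReal.ofReal t < G x} :=
    Antitone.measurable fun s t hst => measure_mono fun x hx =>
      (ENNReal.ofReal_le_ofReal hst).trans_lt hx
  rw [← lintegral_const_mul _ mF, ← lintegral_const_mul _ mG,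
    ← lintegral_add_left (mF.const_mul _)]
  refine setLIntegral_mono' measurableSet_Ioo fun t ht => ?_
  have ht1 : ENNReal.ofReal t < 1 := by
    rw [← ENNReal.ofReal_one]
    exact (ENNReal.ofReal_lt_ofReal_iff one_pos).2 ht.2
  refine bm1 ha hb (hF measurableSet_Ioi) (hG measurableSet_Ioi) ?_ ?_ ?_
  · rw [← hF1] at ht1
    exact lt_iSup_iff.1 ht1
  · rw [← hG1] at ht1
    exact lt_iSup_iff.1 ht1
  · intro x hx y hy
    refine lt_min (lt_of_lt_of_le ?_ (h x y)) ht1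
    have e : ENNReal.ofReal t = ENNReal.ofReal t ^ a * ENNReal.ofReal t ^ b := by
      rw [← ENNReal.rpow_add _ _ (by simpa using ht.1) (by simp), hab, ENNReal.rpow_one]
    rw [e]
    exact ENNReal.mul_lt_mul (ENNReal.rpow_lt_rpow hx ha) (ENNReal.rpow_lt_rpow hy hb)

lemma ennreal_amgm {a b : ℝ} (ha : 0 < a) (hb : 0 < b) (hab : a + b = 1) (p q : ℝ≥0∞) :
    p ^ a * q ^ b ≤ ENNReal.ofReal a * p + ENNReal.ofReal b * q := by
  by_cases hp : p = ⊤
  · subst hp; rw [ENNReal.mul_top (by simpa using ha)]; simp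
  by_cases hq : q = ⊤
  · subst hq; rw [ENNReal.mul_top (by simpa using hb)]; simp
  lift p to NNReal using hp
  lift q to NNReal using hq
  have := NNReal.geom_mean_le_arith_mean2_weighted (Real.toNNReal a) (Real.toNNReal b) p q
    (by rw [← Real.toNNReal_add ha.le hb.le, hab, Real.toNNReal_one])
  rw [Real.coe_toNNReal _ ha.le, Real.coe_toNNReal _ hb.le] at this
  rw [← ENNReal.coe_rpow_of_nonneg _ ha.le, ← ENNReal.coe_rpow_of_nonneg _ hb.le]
  show _ ≤ ((Real.toNNReal a : NNReal) : ℝ≥0∞) * p + ((Real.toNNReal b : NNReal) : ℝ≥0∞) * q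
  exact_mod_cast this

/-- One-dimensional Prékopa–Leindler, bounded functions. -/
lemma pl1_bdd {a b : ℝ} (ha : 0 < a) (hb : 0 < b) (hab : a + b = 1) {F G H : ℝ → ℝ≥0∞}
    (hF : Measurable F) (hG : Measurable G) (hH : Measurable H)
    (hF1 : ⨆ x, F x ≠ ⊤) (hG1 : ⨆ x, G x ≠ ⊤)
    (h : ∀ x y, F x ^ a * G y ^ b ≤ H (a * x + b * y)) :
    (∫⁻ x, F x) ^ a * (∫⁻ x, G x) ^ b ≤ ∫⁻ x, H x := by
  by_cases hF0 : ⨆ x, F x = 0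
  · have : ∀ x, F x = 0 := by simpa using hF0
    simp [this, ha]
  by_cases hG0 : ⨆ x, G x = 0
  · have : ∀ x, G x = 0 := by simpa using hG0
    simp [this, hb]
  set M := ⨆ x, F x with hM
  set N := ⨆ x, G x with hN
  have hm0 : M ^ a * N ^ b ≠ 0 := by
    simp [hF0, hG0, ha, hb, hF1, hG1, ENNReal.rpow_eq_zero_iff, ha.not_gt, hb.not_gt]
  have hmt : M ^ a * N ^ b ≠ ⊤ :=
    ENNReal.mul_ne_top (ENNReal.rpow_ne_top_of_nonneg ha.le hF1)
      (ENNReal.rpow_ne_top_of_nonneg hb.le hG1)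
  have hMi : (M ^ a * N ^ b)⁻¹ = (M⁻¹) ^ a * (N⁻¹) ^ b := by
    rw [ENNReal.mul_inv, ENNReal.inv_rpow, ENNReal.inv_rpow]
    · right; exact ENNReal.rpow_ne_top_of_nonneg hb.le hG1
    · left; exact ENNReal.rpow_ne_top_of_nonneg ha.le hF1
  have key := pl1_norm ha hb hab (F := fun x => M⁻¹ * F x) (G := fun x => N⁻¹ * G x)
    (H := fun x => (M ^ a * N ^ b)⁻¹ * H x) (hF.const_mul _) (hG.const_mul _) (hH.const_mul _)
    (by rw [← ENNReal.mul_iSup, ← hM, ENNReal.inv_mul_cancel hF0 hF1])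
    (by rw [← ENNReal.mul_iSup, ← hN, ENNReal.inv_mul_cancel hG0 hG1])
    (fun x y => by
      rw [ENNReal.mul_rpow_of_nonneg _ _ ha.le, ENNReal.mul_rpow_of_nonneg _ _ hb.le,
        mul_mul_mul_comm, hMi]
      gcongr
      exact h x y)
  have key2 := (ennreal_amgm ha hb hab _ _).trans key
  rw [lintegral_const_mul _ hF, lintegral_const_mul _ hG, lintegral_const_mul _ hH,
    ENNReal.mul_rpow_of_nonneg _ _ ha.le, ENNReal.mul_rpow_of_nonneg _ _ hb.le,
    mul_mul_mul_comm, ← hMi] at key2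
  exact (ENNReal.mul_le_mul_iff_right (ENNReal.inv_ne_zero.2 hmt) (ENNReal.inv_ne_top.2 hm0)).1 key2

lemma lintegral_trunc {F : ℝ → ℝ≥0∞} (hF : Measurable F) :
    ∫⁻ x, F x = ⨆ k : ℕ, ∫⁻ x, min (F x) k := by
  rw [← lintegral_iSup (fun k => hF.min measurable_const)]
  · refine lintegral_congr fun x => ?_
    rw [← inf_iSup_eq, ENNReal.iSup_natCast, inf_top_eq]
  · intro i j hij x
    exact min_le_min le_rfl (by exact_mod_cast hij)

/-- One-dimensional Prékopa–Leindler. -/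
lemma pl1 {a b : ℝ} (ha : 0 < a) (hb : 0 < b) (hab : a + b = 1) {F G H : ℝ → ℝ≥0∞}
    (hF : Measurable F) (hG : Measurable G) (hH : Measurable H)
    (h : ∀ x y, F x ^ a * G y ^ b ≤ H (a * x + b * y)) :
    (∫⁻ x, F x) ^ a * (∫⁻ x, G x) ^ b ≤ ∫⁻ x, H x := by
  have hk : ∀ k : ℕ, (∫⁻ x, min (F x) k) ^ a * (∫⁻ x, min (G x) k) ^ b ≤ ∫⁻ x, H x := by
    intro k
    have bd : ∀ F : ℝ → ℝ≥0∞, ⨆ x, min (F x) k ≠ ⊤ := fun F =>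
      ne_top_of_le_ne_top (ENNReal.natCast_ne_top k) (iSup_le fun x => min_le_right _ _)
    refine pl1_bdd ha hb hab (hF.min measurable_const) (hG.min measurable_const) hH
      (bd F) (bd G) fun x y => le_trans ?_ (h x y)
    gcongr
    · exact min_le_left _ _
    · exact min_le_left _ _
  have sup : ∀ {c : ℝ} (_ : 0 < c) (u : ℕ → ℝ≥0∞), (⨆ k, u k) ^ c = ⨆ k, (u k) ^ c := by
    intro c hc u
    exact (ENNReal.orderIsoRpow c hc).map_iSup u
  rw [lintegral_trunc hF, lintegral_trunc hG, sup ha, sup hb]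
  rw [ENNReal.iSup_mul]
  refine iSup_le fun i => ?_
  rw [ENNReal.mul_iSup]
  refine iSup_le fun j => le_trans ?_ (hk (max i j))
  gcongr
  · exact le_max_left i j
  · exact le_max_right i j

/-- Prékopa–Leindler on `Fin n → ℝ`. -/
lemma pl_pi {a b : ℝ} (ha : 0 < a) (hb : 0 < b) (hab : a + b = 1) (n : ℕ) :
    ∀ {F G H : (Fin n → ℝ) → ℝ≥0∞}, Measurable F → Measurable G → Measurable H →
    (∀ x y, F x ^ a * G y ^ b ≤ H (a • x + b • y)) →
    (∫⁻ x, F x) ^ a * (∫⁻ x, G x) ^ b ≤ ∫⁻ x, H x := by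
  induction n with
  | zero =>
    intro F G H hF hG hH h
    have e : ∀ F : (Fin 0 → ℝ) → ℝ≥0∞, ∫⁻ x, F x = F 0 := by
      intro F
      rw [volume_pi, Measure.pi_of_empty _ (0 : Fin 0 → ℝ), lintegral_dirac]
    rw [e, e, e]
    simpa using h 0 0
  | succ n ih =>
    intro F G H hF hG hH h
    let e := MeasurableEquiv.piFinSuccAbove (fun _ : Fin (n + 1) => ℝ) 0
    have he : MeasurePreserving e.symm volume volume :=
      (volume_preserving_piFinSuccAbove (fun _ : Fin (n + 1) => ℝ) 0).symm
    have hint : ∀ {F : (Fin (n + 1) → ℝ) → ℝ≥0∞}, Measurable F →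
        ∫⁻ x, F x = ∫⁻ s : ℝ, ∫⁻ z : Fin n → ℝ, F (e.symm (s, z)) := by
      intro F hF
      rw [← he.lintegral_comp hF]
      exact lintegral_prod _ (hF.comp e.symm.measurable).aemeasurable
    have hm : ∀ {F : (Fin (n + 1) → ℝ) → ℝ≥0∞}, Measurable F →
        Measurable fun s : ℝ => ∫⁻ z : Fin n → ℝ, F (e.symm (s, z)) := fun hF =>
      Measurable.lintegral_prod_right' (hF.comp e.symm.measurable)
    rw [hint hF, hint hG, hint hH]
    refine pl1 ha hb hab (hm hF) (hm hG) (hm hH) fun s t => ?_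
    have hs : ∀ s : ℝ, Measurable fun z : Fin n → ℝ => e.symm (s, z) := fun s =>
      e.symm.measurable.comp measurable_prodMk_left
    refine ih (hF.comp (hs s)) (hG.comp (hs t)) (hH.comp (hs _)) fun x y => ?_
    refine (h _ _).trans (le_of_eq ?_)
    congr 1
    ext i
    refine Fin.cases ?_ (fun j => ?_) i
    · simp [e, MeasurableEquiv.piFinSuccAbove, Fin.insertNthEquiv]
    · simp [e, MeasurableEquiv.piFinSuccAbove, Fin.insertNthEquiv]

/-- Prékopa–Leindler on Euclidean space. -/
lemma pl_euclidean {a b : ℝ} (ha : 0 < a) (hb : 0 < b) (hab : a + b = 1) {n : ℕ}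
    {F G H : EuclideanSpace ℝ (Fin n) → ℝ≥0∞}
    (hF : Measurable F) (hG : Measurable G) (hH : Measurable H)
    (h : ∀ x y, F x ^ a * G y ^ b ≤ H (a • x + b • y)) :
    (∫⁻ x, F x) ^ a * (∫⁻ x, G x) ^ b ≤ ∫⁻ x, H x := by
  have he := PiLp.volume_preserving_toLp (Fin n)
  rw [← he.lintegral_comp hF, ← he.lintegral_comp hG, ← he.lintegral_comp hH]
  refine pl_pi ha hb hab n (hF.comp he.measurable) (hG.comp he.measurable)
    (hH.comp he.measurable) fun x y => ?_
  simpa using h (WithLp.toLp 2 x) (WithLp.toLp 2 y)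

/-- Brunn–Minkowski. -/
lemma bm_euclidean {a b : ℝ} (ha : 0 < a) (hb : 0 < b) {n : ℕ}
    {A B C : Set (EuclideanSpace ℝ (Fin n))}
    (hA : MeasurableSet A) (hB : MeasurableSet B) (hC : MeasurableSet C)
    {p q : ℝ} (hp : 0 < p) (hq : 0 < q)
    (hAp : volume A = ENNReal.ofReal (p ^ n)) (hBq : volume B = ENNReal.ofReal (q ^ n))
    (h : ∀ x ∈ A, ∀ y ∈ B, a • x + b • y ∈ C) :
    ENNReal.ofReal ((a * p + b * q) ^ n) ≤ volume C := by
  have hS : 0 < a * p + b * q := by positivity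
  set S := a * p + b * q with hSdef
  have ms : ∀ (r : ℝ) {A : Set (EuclideanSpace ℝ (Fin n))}, MeasurableSet A →
      MeasurableSet ((fun x => r • x) ⁻¹' A) := fun r A hA => (measurable_const_smul r) hA
  have hv : ∀ {r : ℝ} (_ : 0 < r) (A : Set (EuclideanSpace ℝ (Fin n))),
      volume ((fun x => r • x) ⁻¹' A) = (ENNReal.ofReal (r ^ n))⁻¹ * volume A := by
    intro r hr A
    rw [Measure.addHaar_preimage_smul _ hr.ne', finrank_euclideanSpace_fin,
      abs_of_pos (by positivity), ENNReal.ofReal_inv_of_pos (by positivity)]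
  have hone : ∀ {r : ℝ} (_ : 0 < r),
      (ENNReal.ofReal (r ^ n))⁻¹ * ENNReal.ofReal (r ^ n) = 1 := by
    intro r hr
    exact ENNReal.inv_mul_cancel (by simpa using pow_pos hr n) (by simp)
  have key := pl_euclidean (a := a * p / S) (b := b * q / S) (by positivity) (by positivity)
    (by rw [← add_div, div_self hS.ne'])
    (F := ((fun x => p • x) ⁻¹' A).indicator 1) (G := ((fun x => q • x) ⁻¹' B).indicator 1)
    (H := ((fun x => S • x) ⁻¹' C).indicator 1)
    (measurable_one.indicator (ms p hA)) (measurable_one.indicator (ms q hB))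
    (measurable_one.indicator (ms S hC)) (fun x y => by
      by_cases hx : p • x ∈ A
      · by_cases hy : q • y ∈ B
        · have := h _ hx _ hy
          rw [Set.indicator_of_mem (s := (fun x => S • x) ⁻¹' C)]
          · rw [Set.indicator_of_mem (by exact hx), Set.indicator_of_mem (by exact hy)]
            simp
          · show S • _ ∈ C
            convert this using 1
            rw [smul_add, smul_smul, smul_smul, smul_smul, smul_smul,
              mul_div_cancel₀ _ hS.ne', mul_div_cancel₀ _ hS.ne']
        · rw [Set.indicator_of_notMem (s := (fun x => q • x) ⁻¹' B) (by exact hy),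
            ENNReal.zero_rpow_of_pos (by positivity)]
          simp
      · rw [Set.indicator_of_notMem (s := (fun x => p • x) ⁻¹' A) (by exact hx),
            ENNReal.zero_rpow_of_pos (by positivity)]
        simp)
  rw [lintegral_indicator_one (ms p hA), lintegral_indicator_one (ms q hB),
    lintegral_indicator_one (ms S hC), hv hp, hv hq, hv hS, hAp, hBq, hone hp, hone hq,
    ENNReal.one_rpow, ENNReal.one_rpow, one_mul, mul_comm, ← div_eq_mul_inv] at key
  simpa using (ENNReal.le_div_iff_mul_le (by left; simpa using pow_pos hS n) (by left; simp)).1 key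

/-- Radius of the rearranged superlevel set. -/
def rad {n : ℕ} (f : EuclideanSpace ℝ (Fin n) → ℝ) (t : ℝ) : ℝ :=
  (volume {y | t < f y} / volume (Metric.ball (0 : EuclideanSpace ℝ (Fin n)) 1)).toReal
    ^ (1 / (n : ℝ))

lemma level_incl {n : ℕ} {f : EuclideanSpace ℝ (Fin n) → ℝ} (hf0 : ∀ x, 0 ≤ f x)
    (hf : IsLogConcave f) {a b s t : ℝ} (ha : 0 < a) (hb : 0 < b) (hab : a + b = 1)
    (hs : 0 < s) (ht : 0 < t) {x y : EuclideanSpace ℝ (Fin n)} (hx : s < f x) (hy : t < f y) :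
    s ^ a * t ^ b < f (a • x + b • y) := by
  have hx' : x ∈ Function.support f := (hs.trans hx).ne'
  have hy' : y ∈ Function.support f := (ht.trans hy).ne'
  have hz : a • x + b • y ∈ Function.support f := hf.1 hx' hy' ha.le hb.le hab
  have hz0 : 0 < f (a • x + b • y) := lt_of_le_of_ne (hf0 _) (Ne.symm hz)
  have h := hf.2 hx' hy' ha.le hb.le hab
  simp only [smul_eq_mul] at h
  have hst : 0 < s ^ a * t ^ b := by positivity
  rw [← Real.log_lt_log_iff hst hz0, Real.log_mul (by positivity) (by positivity),
    Real.log_rpow hs, Real.log_rpow ht]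
  have e1 := mul_lt_mul_of_pos_left (Real.log_lt_log hs hx) ha
  have e2 := mul_lt_mul_of_pos_left (Real.log_lt_log ht hy) hb
  linarith

lemma ball_vol_pos (n : ℕ) :
    0 < (volume (Metric.ball (0 : EuclideanSpace ℝ (Fin n)) 1)).toReal :=
  ENNReal.toReal_pos (Metric.measure_ball_pos volume _ one_pos).ne' measure_ball_lt_top.ne

lemma rad_eq {n : ℕ} (f : EuclideanSpace ℝ (Fin n) → ℝ) (t : ℝ) :
    rad f t = (volume {y | t < f y}).toReal ^ (1 / (n : ℝ)) /
      (volume (Metric.ball (0 : EuclideanSpace ℝ (Fin n)) 1)).toReal ^ (1 / (n : ℝ)) := by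
  rw [rad, ENNReal.toReal_div, Real.div_rpow ENNReal.toReal_nonneg ENNReal.toReal_nonneg]

lemma rad_nonneg {n : ℕ} (f : EuclideanSpace ℝ (Fin n) → ℝ) (t : ℝ) : 0 ≤ rad f t := by
  unfold rad; positivity

lemma rad_anti {n : ℕ} {f : EuclideanSpace ℝ (Fin n) → ℝ}
    (hvan : ∀ t : ℝ, 0 < t → volume {x | t < f x} < ⊤) {s t : ℝ} (hs : 0 < s) (hst : s ≤ t) :
    rad f t ≤ rad f s := by
  rw [rad_eq, rad_eq]
  have hsub : {x | t < f x} ⊆ {x | s < f x} := fun x hx => lt_of_le_of_lt hst hx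
  have := ENNReal.toReal_mono (hvan s hs).ne (measure_mono (μ := volume) hsub)
  exact div_le_div_of_nonneg_right
    (Real.rpow_le_rpow ENNReal.toReal_nonneg this (by positivity)) (by positivity)

lemma rad_concave {n : ℕ} (hn : n ≠ 0) {f : EuclideanSpace ℝ (Fin n) → ℝ}
    (hmeas : Measurable f) (hf0 : ∀ x, 0 ≤ f x)
    (hvan : ∀ t : ℝ, 0 < t → volume {x | t < f x} < ⊤) (hf : IsLogConcave f)
    {a b s t : ℝ} (ha : 0 ≤ a) (hb : 0 ≤ b) (hab : a + b = 1)
    (hs : 0 < s) (ht : 0 < t) (hrs : 0 < rad f s) (hrt : 0 < rad f t) :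
    a * rad f s + b * rad f t ≤ rad f (s ^ a * t ^ b) := by
  rcases ha.eq_or_lt with rfl | ha
  · obtain rfl : b = 1 := by linarith
    simp
  rcases hb.eq_or_lt with rfl | hb
  · obtain rfl : a = 1 := by linarith
    simp
  have hw := Real.rpow_pos_of_pos (ball_vol_pos n) (1 / (n : ℝ))
  rw [rad_eq] at hrs hrt
  rw [rad_eq, rad_eq, rad_eq, ← mul_div_assoc, ← mul_div_assoc, ← add_div]
  have hp := (div_pos_iff_of_pos_right hw).1 hrs
  have hq := (div_pos_iff_of_pos_right hw).1 hrt
  refine div_le_div_of_nonneg_right ?_ hw.le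
  have hst : 0 < s ^ a * t ^ b := by positivity
  have hpow : ∀ u : ℝ, 0 < u → volume {y | u < f y} =
      ENNReal.ofReal (((volume {y | u < f y}).toReal ^ (1 / (n : ℝ))) ^ n) := by
    intro u hu
    rw [one_div, Real.rpow_inv_natCast_pow ENNReal.toReal_nonneg hn,
      ENNReal.ofReal_toReal (hvan u hu).ne]
  have ms : ∀ u : ℝ, MeasurableSet {y | u < f y} := fun u => hmeas measurableSet_Ioi
  have key := bm_euclidean ha hb (ms s) (ms t) (ms (s ^ a * t ^ b)) hp hq (hpow s hs) (hpow t ht)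
    (fun x hx y hy => level_incl hf0 hf ha hb hab hs ht hx hy)
  rw [hpow _ hst, ENNReal.ofReal_le_ofReal_iff (by positivity)] at key
  exact le_of_pow_le_pow_left₀ hn (by positivity) key

lemma rad_eventually {n : ℕ} (hn : n ≠ 0) {f : EuclideanSpace ℝ (Fin n) → ℝ}
    (hmeas : Measurable f) (hf0 : ∀ x, 0 ≤ f x)
    (hvan : ∀ t : ℝ, 0 < t → volume {x | t < f x} < ⊤) (hf : IsLogConcave f) :
    ∃ M : ℝ, 0 < M ∧ rad f M = 0 := by
  by_contra hcon
  have hpos : ∀ t : ℝ, 0 < t → 0 < rad f t := fun t ht =>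
    lt_of_le_of_ne (rad_nonneg f t) fun h => hcon ⟨t, ht, h.symm⟩
  -- concavity forces the radius to be constant on `[1, ∞)`
  have hge : ∀ M : ℝ, 0 < M → rad f 1 ≤ rad f M := by
    intro M hM
    have hk : ∀ k : ℕ, rad f 1 - rad f 1 * (1 / ((k : ℝ) + 1)) ≤ rad f M := by
      intro k
      have hk0 : (0 : ℝ) < (k : ℝ) + 1 := by positivity
      have hk1 : 1 / ((k : ℝ) + 1) ≤ 1 := by
        rw [div_le_one hk0]; linarith [(Nat.cast_nonneg k : (0 : ℝ) ≤ k)]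
      have h := rad_concave hn hmeas hf0 hvan hf (a := 1 - 1 / ((k : ℝ) + 1))
        (b := 1 / ((k : ℝ) + 1)) (s := 1) (t := M ^ ((k : ℝ) + 1)) (by linarith) (by positivity)
        (by ring) one_pos (by positivity) (hpos _ one_pos) (hpos _ (by positivity))
      rw [Real.one_rpow, one_mul, ← Real.rpow_mul hM.le, mul_one_div_cancel hk0.ne',
        Real.rpow_one] at h
      have : 0 ≤ 1 / ((k : ℝ) + 1) * rad f (M ^ ((k : ℝ) + 1)) :=
        mul_nonneg (by positivity) (rad_nonneg _ _)
      linarith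
    have hlim : Tendsto (fun k : ℕ => rad f 1 - rad f 1 * (1 / ((k : ℝ) + 1))) atTop
        (nhds (rad f 1 - rad f 1 * 0)) :=
      tendsto_const_nhds.sub (tendsto_one_div_add_atTop_nhds_zero_nat.const_mul _)
    rw [mul_zero, sub_zero] at hlim
    exact le_of_tendsto' hlim hk
  have hlim := tendsto_measure_iInter_atTop (μ := (volume : Measure (EuclideanSpace ℝ (Fin n))))
    (s := fun k : ℕ => {y | (k : ℝ) + 1 < f y})
    (fun k => (hmeas measurableSet_Ioi).nullMeasurableSet)
    (fun i j hij x (hx : (j : ℝ) + 1 < f x) => by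
      have : (i : ℝ) ≤ j := by exact_mod_cast hij
      show (i : ℝ) + 1 < f x
      linarith)
    ⟨0, (hvan _ (by positivity)).ne⟩
  have hemp : (⋂ k : ℕ, {y | (k : ℝ) + 1 < f y}) = ∅ := by
    ext x
    simp only [Set.mem_iInter, Set.mem_empty_iff_false, iff_false, not_forall]
    obtain ⟨k, hk⟩ := exists_nat_gt (f x)
    refine ⟨k, fun h => ?_⟩
    have h : (k : ℝ) + 1 < f x := h
    linarith
  rw [hemp, measure_empty] at hlim
  have h2 : Tendsto (fun k : ℕ => rad f ((k : ℝ) + 1)) atTop (nhds 0) := by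
    have h3 := (ENNReal.tendsto_toReal (a := 0) (by simp)).comp hlim
    have h4 := (h3.rpow_const (p := 1 / (n : ℝ)) (Or.inr (by positivity))).div_const
      ((volume (Metric.ball (0 : EuclideanSpace ℝ (Fin n)) 1)).toReal ^ (1 / (n : ℝ)))
    rw [ENNReal.toReal_zero, Real.zero_rpow (by positivity), zero_div] at h4
    exact h4.congr fun k => (rad_eq f _).symm
  have := ge_of_tendsto' h2 fun k => hge ((k : ℝ) + 1) (by positivity)
  linarith [hpos 1 one_pos]

lemma symm_eq {n : ℕ} {f : EuclideanSpace ℝ (Fin n) → ℝ}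
    (hvan : ∀ t : ℝ, 0 < t → volume {x | t < f x} < ⊤) (x : EuclideanSpace ℝ (Fin n)) :
    symmDecRearrangement f x = (volume {t : ℝ | 0 < t ∧ ‖x‖ < rad f t}).toReal := by
  have hT : MeasurableSet {t : ℝ | 0 < t ∧ ‖x‖ < rad f t} := by
    apply Set.OrdConnected.measurableSet
    refine ⟨fun s hs t ht u hu => ⟨hs.1.trans_le hu.1, ht.2.trans_le ?_⟩⟩
    exact rad_anti hvan (hs.1.trans_le hu.1) hu.2
  have e : symmDecRearrangement f x =
      ∫ t, ({t : ℝ | 0 < t ∧ ‖x‖ < rad f t}).indicator (fun _ => (1 : ℝ)) t := by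
    rw [symmDecRearrangement, ← integral_indicator measurableSet_Ioi]
    congr 1
    ext t
    have hmem : x ∈ rearrangedSet n {y | t < f y} ↔ ‖x‖ < rad f t := by
      rw [rearrangedSet, mem_ball_zero_iff, rad]
    by_cases ht : 0 < t <;> by_cases hx : ‖x‖ < rad f t <;>
      simp [Set.indicator_apply, hmem, ht, hx]
  rw [e, integral_indicator_const _ hT]
  simp [Measure.real]

/-- The symmetric decreasing rearrangement of a log-concave function vanishing at
infinity is log-concave. -/
theorem stmt11 (n : ℕ) (f : EuclideanSpace ℝ (Fin n) → ℝ)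
    (hmeas : Measurable f) (hf0 : ∀ x, 0 ≤ f x)
    (hvan : ∀ t : ℝ, 0 < t → volume {x | t < f x} < ⊤)
    (hf : IsLogConcave f) :
    IsLogConcave (symmDecRearrangement f) := by
  rcases Nat.eq_zero_or_pos n with rfl | hn
  · -- in dimension zero the integral diverges, so its value is zero by convention
    have h0 : ∀ x, symmDecRearrangement f x = 0 := by
      intro x
      rw [symm_eq hvan]
      have : {t : ℝ | 0 < t ∧ ‖x‖ < rad f t} = Set.Ioi 0 := by
        ext t
        have hx : x = 0 := Subsingleton.elim _ _
        simp [rad, hx]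
      rw [this, Real.volume_Ioi]
      simp
    have hs : Function.support (symmDecRearrangement f) = ∅ := by
      ext x; simp [h0]
    unfold IsLogConcave
    rw [hs]
    exact ⟨convex_empty, by simp⟩
  have hn := hn.ne'
  obtain ⟨M, hM, hrM⟩ := rad_eventually hn hmeas hf0 hvan hf
  have hTM : ∀ x : EuclideanSpace ℝ (Fin n),
      {t : ℝ | 0 < t ∧ ‖x‖ < rad f t} ⊆ Set.Ioc 0 M := by
    intro x t ht
    refine ⟨ht.1, ?_⟩
    by_contra h
    have := rad_anti hvan hM (not_le.1 h).le
    linarith [ht.2, norm_nonneg x]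
  have hfin : ∀ x : EuclideanSpace ℝ (Fin n),
      volume {t : ℝ | 0 < t ∧ ‖x‖ < rad f t} ≠ ⊤ := fun x =>
    ne_top_of_le_ne_top (by simp) (measure_mono (hTM x))
  have h1 : ∀ (x : EuclideanSpace ℝ (Fin n)) (t : ℝ), 0 < t → ‖x‖ < rad f t →
      t ≤ symmDecRearrangement f x := by
    intro x t ht hx
    rw [symm_eq hvan]
    have hsub : Set.Ioc 0 t ⊆ {t : ℝ | 0 < t ∧ ‖x‖ < rad f t} := fun u hu =>
      ⟨hu.1, hx.trans_le (rad_anti hvan hu.1 hu.2)⟩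
    have := ENNReal.toReal_mono (hfin x) (measure_mono (μ := volume) hsub)
    simpa [ht.le] using this
  have h2 : ∀ (x : EuclideanSpace ℝ (Fin n)) (t : ℝ), 0 < t → t < symmDecRearrangement f x →
      ‖x‖ < rad f t := by
    intro x t ht hx
    by_contra h
    rw [symm_eq hvan] at hx
    have hsub : {t : ℝ | 0 < t ∧ ‖x‖ < rad f t} ⊆ Set.Ioc 0 t := by
      intro u hu
      refine ⟨hu.1, ?_⟩
      by_contra h'
      exact h (hu.2.trans_le (rad_anti hvan ht (not_le.1 h').le))
    have := ENNReal.toReal_mono (by simp) (measure_mono (μ := volume) hsub)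
    simp [ht.le] at this
    linarith
  have hpos : ∀ x ∈ Function.support (symmDecRearrangement f), 0 < symmDecRearrangement f x := by
    intro x hx
    refine lt_of_le_of_ne ?_ (Ne.symm hx)
    rw [symm_eq hvan]
    positivity
  have key : ∀ x ∈ Function.support (symmDecRearrangement f),
      ∀ y ∈ Function.support (symmDecRearrangement f), ∀ a b : ℝ, 0 ≤ a → 0 ≤ b → a + b = 1 →
      ∀ s t : ℝ, 0 < s → 0 < t → s < symmDecRearrangement f x → t < symmDecRearrangement f y →
      s ^ a * t ^ b ≤ symmDecRearrangement f (a • x + b • y) := by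
    intro x hx y hy a b ha hb hab s t hs ht hsx hty
    have e1 := h2 x s hs hsx
    have e2 := h2 y t ht hty
    refine h1 _ _ (by positivity) (lt_of_lt_of_le ?_ (rad_concave hn hmeas hf0 hvan hf ha hb hab
      hs ht ((norm_nonneg x).trans_lt e1) ((norm_nonneg y).trans_lt e2)))
    refine (norm_add_le _ _).trans_lt ?_
    rw [norm_smul, norm_smul, Real.norm_of_nonneg ha, Real.norm_of_nonneg hb]
    rcases ha.eq_or_lt with rfl | ha'
    · obtain rfl : b = 1 := by linarith
      simpa using e2
    · exact add_lt_add_of_lt_of_le (mul_lt_mul_of_pos_left e1 ha')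
        (mul_le_mul_of_nonneg_left e2.le hb)
  have keypos : ∀ x ∈ Function.support (symmDecRearrangement f),
      ∀ y ∈ Function.support (symmDecRearrangement f), ∀ a b : ℝ, 0 ≤ a → 0 ≤ b → a + b = 1 →
      0 < symmDecRearrangement f (a • x + b • y) := by
    intro x hx y hy a b ha hb hab
    have px := hpos x hx
    have py := hpos y hy
    refine lt_of_lt_of_le ?_ (key x hx y hy a b ha hb hab _ _ (half_pos px) (half_pos py)
      (half_lt_self px) (half_lt_self py))
    positivity
  refine ⟨fun x hx y hy a b ha hb hab => (keypos x hx y hy a b ha hb hab).ne', ?_⟩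
  intro x hx y hy a b ha hb hab
  have px := hpos x hx
  have py := hpos y hy
  have pz := keypos x hx y hy a b ha hb hab
  simp only [smul_eq_mul]
  refine le_of_forall_pos_le_add fun ε hε => ?_
  have hc : Real.exp (-ε) < 1 := by simpa using hε
  have hc0 := Real.exp_pos (-ε)
  have h := key x hx y hy a b ha hb hab (Real.exp (-ε) * symmDecRearrangement f x)
    (Real.exp (-ε) * symmDecRearrangement f y) (by positivity) (by positivity)
    (mul_lt_of_lt_one_left px hc) (mul_lt_of_lt_one_left py hc)
  have h' := Real.log_le_log (by positivity) h
  rw [Real.log_mul (by positivity) (by positivity), Real.log_rpow (by positivity),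
    Real.log_rpow (by positivity), Real.log_mul hc0.ne' px.ne', Real.log_mul hc0.ne' py.ne',
    Real.log_exp] at h'
  have e : a * ε + b * ε = ε := by rw [← add_mul, hab, one_mul]
  linarith

end
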